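/- The Galois group over ℚ of the polynomial q(X) = X⁵ + 480 X⁴ + 87264 X³ + 7409920 X² + 287600640 X + 3933241344 (i.e. the Galois group of its splitting field over ℚ) is isomorphic to the symmetric group S₅ on five letters. -/

import Mathlib

/-!
Viewed as a permutation group of the five roots, the Galois group is all of `S₅` as soon as it has
order divisible by `5` and contains a transposition (`Equiv.Perm.subgroup_eq_top_of_swap_mem`).

* The quintic is irreducible modulo `13`, hence over `ℚ`, so `5` divides the order.
* Modulo `41` it has three simple roots `12`, `26`, `40` and no other root, the remaining factor
  being an irreducible quadratic. By Hensel's lemma it has exactly three roots in `ℤ₄₁`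
  (`exists_three_roots`), hence in `ℚ₄₁`. Realizing the roots in an algebraic closure of `ℚ₄₁`, an
  automorphism over `ℚ₄₁` that moves a root outside `ℚ₄₁` fixes three of the five roots, so it
  restricts to a transposition (`exists_isSwap`).

All five roots are real, so complex conjugation gives no transposition; the prime `41` plays the
role of the real place.
-/

open Polynomial

/-- The quintic `X⁵ + 480X⁴ + 87264X³ + 7409920X² + 287600640X
+ 3933241344` over `ℚ`. -/
noncomputable def qQuintic : ℚ[X] :=
  X ^ 5 + 480 * X ^ 4 + 87264 * X ^ 3 + 7409920 * X ^ 2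
    + 287600640 * X + 3933241344

/-- The integral model of `qQuintic`. -/
noncomputable def qQuinticInt : ℤ[X] :=
  X ^ 5 + 480 * X ^ 4 + 87264 * X ^ 3 + 7409920 * X ^ 2
    + 287600640 * X + 3933241344

lemma qQuinticInt_map : qQuinticInt.map (algebraMap ℤ ℚ) = qQuintic := by
  simp [qQuinticInt, qQuintic]

lemma qQuinticInt_monic : qQuinticInt.Monic := by
  unfold qQuinticInt
  monicity!

lemma qQuintic_natDegree : qQuintic.natDegree = 5 := by
  unfold qQuintic
  compute_degree!

lemma qQuinticInt_aeval {A : Type*} [CommRing A] [Algebra ℤ A] (x : A) :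
    aeval x qQuinticInt = x ^ 5 + 480 * x ^ 4 + 87264 * x ^ 3 + 7409920 * x ^ 2
      + 287600640 * x + 3933241344 := by
  simp [qQuinticInt, map_ofNat]

lemma qQuinticInt_derivative_aeval {A : Type*} [CommRing A] [Algebra ℤ A] (x : A) :
    aeval x (derivative qQuinticInt) = 5 * x ^ 4 + 480 * (4 * x ^ 3) + 87264 * (3 * x ^ 2)
      + 7409920 * (2 * x) + 287600640 := by
  simp [qQuinticInt, derivative_pow, map_ofNat]

/-! ### Irreducibility modulo 13 -/

/-- The reduction of `qQuintic` modulo `13`. -/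
noncomputable def qQuinticMod13 : (ZMod 13)[X] :=
  X ^ 5 + 12 * X ^ 4 + 8 * X ^ 3 + 11 * X ^ 2 + 2 * X + 6

instance : Fact (Nat.Prime 13) := ⟨by norm_num⟩

lemma qQuinticInt_map_mod13 : qQuinticInt.map (Int.castRingHom (ZMod 13)) = qQuinticMod13 := by
  have h1 : (480 : (ZMod 13)[X]) = 12 := by
    rw [← map_ofNat C 480, ← map_ofNat C 12]; exact congrArg C (by decide)
  have h2 : (87264 : (ZMod 13)[X]) = 8 := by
    rw [← map_ofNat C 87264, ← map_ofNat C 8]; exact congrArg C (by reduce_mod_char)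
  have h3 : (7409920 : (ZMod 13)[X]) = 11 := by
    rw [← map_ofNat C 7409920, ← map_ofNat C 11]; exact congrArg C (by reduce_mod_char)
  have h4 : (287600640 : (ZMod 13)[X]) = 2 := by
    rw [← map_ofNat C 287600640, ← map_ofNat C 2]; exact congrArg C (by reduce_mod_char)
  have h5 : (3933241344 : (ZMod 13)[X]) = 6 := by
    rw [← map_ofNat C 3933241344, ← map_ofNat C 6]; exact congrArg C (by reduce_mod_char)
  simp [qQuinticInt, qQuinticMod13, h1, h2, h3, h4, h5]

set_option maxRecDepth 10000 in
lemma no_root_mod13 : ∀ x : ZMod 13,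
    x ^ 5 + 12 * x ^ 4 + 8 * x ^ 3 + 11 * x ^ 2 + 2 * x + 6 ≠ 0 := by
  decide

set_option maxRecDepth 100000 in
/-- The two expressions are the coefficients of the remainder of the quintic on division by
`X² + aX + b`, whose quotient is `X³ + cX² + dX + e` with `c = 12 - a`, `d = 8 - b - ac` and
`e = 11 - bc - ad`. -/
lemma remainder_ne_zero_mod13 : ∀ a b : ZMod 13,
    ¬ (2 - b * (8 - b - a * (12 - a)) - a * (11 - b * (12 - a) - a * (8 - b - a * (12 - a))) = 0 ∧
      6 - b * (11 - b * (12 - a) - a * (8 - b - a * (12 - a))) = 0) := by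
  decide

lemma qQuinticMod13_irreducible : Irreducible qQuinticMod13 := by
  have hdeg : qQuinticMod13.natDegree = 5 := by
    unfold qQuinticMod13; compute_degree!
  have hne : qQuinticMod13 ≠ 0 := by
    intro h; rw [h] at hdeg; simp at hdeg
  rw [irreducible_iff_lt_natDegree_lt hne (fun h => by
    have := natDegree_eq_zero_of_isUnit h; omega)]
  intro f hf hfd hdvd
  rw [hdeg, Finset.mem_Ioc] at hfd
  obtain h1 | h2 : f.natDegree = 1 ∨ f.natDegree = 2 := by omega
  · have hfX : f = X + C (f.coeff 0) := hf.eq_X_add_C h1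
    have hroot : f.eval (-f.coeff 0) = 0 := by
      conv_lhs => rw [hfX]
      simp
    have := eval_eq_zero_of_dvd_of_eval_eq_zero hdvd hroot
    exact no_root_mod13 (-f.coeff 0) (by simpa [qQuinticMod13] using this)
  · obtain ⟨a, b, hfab⟩ : ∃ a b : ZMod 13, f = X ^ 2 + C a * X + C b := by
      refine ⟨f.coeff 1, f.coeff 0, ?_⟩
      have h := hf.as_sum
      rw [h2] at h
      conv_lhs => rw [h]
      simp [Finset.sum_range_succ]
      ring
    set c := 12 - a with hc
    set d := 8 - b - a * c with hd
    set e := 11 - b * c - a * d with he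
    have key : qQuinticMod13 = f * (X ^ 3 + C c * X ^ 2 + C d * X + C e)
        + (C (2 - b * d - a * e) * X + C (6 - b * e)) := by
      have hcc : (C c : (ZMod 13)[X]) = 12 - C a := by simp [hc, map_ofNat]
      have hdd : (C d : (ZMod 13)[X]) = 8 - C b - C a * C c := by simp [hd, map_ofNat]
      have hee : (C e : (ZMod 13)[X]) = 11 - C b * C c - C a * C d := by simp [he, map_ofNat]
      rw [hfab, qQuinticMod13]
      simp only [map_sub, map_mul, map_ofNat, hee, hdd, hcc]
      ring
    have hr : f ∣ C (2 - b * d - a * e) * X + C (6 - b * e) := by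
      rw [key] at hdvd
      exact (dvd_add_right (dvd_mul_right _ _)).1 hdvd
    have hz : C (2 - b * d - a * e) * X + C (6 - b * e) = 0 := by
      by_contra hnz
      have := natDegree_le_of_dvd hr hnz
      have := natDegree_linear_le (a := 2 - b * d - a * e) (b := 6 - b * e)
      omega
    refine remainder_ne_zero_mod13 a b ⟨?_, ?_⟩
    · simpa using congrArg (coeff · 1) hz
    · simpa using congrArg (coeff · 0) hz

lemma qQuintic_irreducible : Irreducible qQuintic := by
  rw [← qQuinticInt_map, ← qQuinticInt_monic.irreducible_iff_irreducible_map_fraction_map]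
  refine qQuinticInt_monic.irreducible_of_irreducible_map (Int.castRingHom (ZMod 13)) _ ?_
  rw [qQuinticInt_map_mod13]
  exact qQuinticMod13_irreducible

/-! ### Roots in the 41-adic numbers -/

instance : Fact (Nat.Prime 41) := ⟨by norm_num⟩

set_option maxRecDepth 100000 in
lemma root_mod41 : ∀ x : ZMod 41,
    x ^ 5 + 29 * x ^ 4 + 16 * x ^ 3 + 31 * x ^ 2 + 31 * x + 29 = 0 →
      x = 12 ∨ x = 26 ∨ x = 40 := by
  decide

lemma toZMod_root {z : ℤ_[41]} (hz : aeval z qQuinticInt = 0) :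
    PadicInt.toZMod z = 12 ∨ PadicInt.toZMod z = 26 ∨ PadicInt.toZMod z = 40 := by
  apply root_mod41
  have h := congrArg (PadicInt.toZMod (p := 41)) hz
  rw [qQuinticInt_aeval] at h
  simp only [map_add, map_mul, map_pow, map_ofNat, map_zero] at h
  rw [← h]
  reduce_mod_char

lemma norm_sub_lt_one_iff (z : ℤ_[41]) (n : ℤ) :
    ‖z - n‖ < 1 ↔ PadicInt.toZMod z = (n : ZMod 41) := by
  rw [← PadicInt.mem_nonunits, ← IsLocalRing.mem_maximalIdeal, ← PadicInt.ker_toZMod,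
    RingHom.mem_ker, map_sub, sub_eq_zero, map_intCast]

/-- Hensel's lemma at a simple root `n` modulo `41`: it lifts to exactly one root. -/
lemma hensel_mod41 (n : ℤ) (h0 : (41 : ℤ) ∣ aeval n qQuinticInt)
    (h1 : ¬ (41 : ℤ) ∣ aeval n (derivative qQuinticInt)) :
    ∃ z : ℤ_[41], aeval z qQuinticInt = 0 ∧ PadicInt.toZMod z = (n : ZMod 41) ∧
      ∀ z' : ℤ_[41], aeval z' qQuinticInt = 0 → PadicInt.toZMod z' = (n : ZMod 41) → z' = z := by
  have cast (f : ℤ[X]) : aeval (n : ℤ_[41]) f = ((aeval n f : ℤ) : ℤ_[41]) := by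
    simpa using aeval_algebraMap_apply ℤ_[41] n f
  have hd : ‖aeval (n : ℤ_[41]) (derivative qQuinticInt)‖ = 1 := by
    rw [cast]
    refine le_antisymm (PadicInt.norm_le_one _) (not_lt.1 fun h => h1 ?_)
    exact_mod_cast (PadicInt.norm_int_lt_one_iff_dvd _).1 h
  have hv : ‖aeval (n : ℤ_[41]) qQuinticInt‖ < 1 := by
    rw [cast]
    exact (PadicInt.norm_int_lt_one_iff_dvd _).2 (by exact_mod_cast h0)
  obtain ⟨z, hz, hzn, -, huniq⟩ := hensels_lemma (F := qQuinticInt) (a := (n : ℤ_[41]))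
    (by rw [hd]; simpa using hv)
  rw [hd] at hzn huniq
  exact ⟨z, hz, (norm_sub_lt_one_iff z n).1 hzn,
    fun w hw hmod => huniq w hw ((norm_sub_lt_one_iff w n).2 hmod)⟩

/-- The quintic has exactly three roots in `ℤ₄₁`. -/
lemma exists_three_roots : ∃ z₁ z₂ z₃ : ℤ_[41], z₁ ≠ z₂ ∧ z₁ ≠ z₃ ∧ z₂ ≠ z₃ ∧
    ∀ z : ℤ_[41], aeval z qQuinticInt = 0 ↔ z = z₁ ∨ z = z₂ ∨ z = z₃ := by
  obtain ⟨z₁, h₁, m₁, u₁⟩ := hensel_mod41 12 (by rw [qQuinticInt_aeval]; norm_num)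
    (by rw [qQuinticInt_derivative_aeval]; norm_num)
  obtain ⟨z₂, h₂, m₂, u₂⟩ := hensel_mod41 26 (by rw [qQuinticInt_aeval]; norm_num)
    (by rw [qQuinticInt_derivative_aeval]; norm_num)
  obtain ⟨z₃, h₃, m₃, u₃⟩ := hensel_mod41 40 (by rw [qQuinticInt_aeval]; norm_num)
    (by rw [qQuinticInt_derivative_aeval]; norm_num)
  refine ⟨z₁, z₂, z₃, ?_, ?_, ?_, fun z => ⟨fun hz => ?_, ?_⟩⟩
  · rintro rfl; rw [m₁] at m₂; revert m₂; decide
  · rintro rfl; rw [m₁] at m₃; revert m₃; decide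
  · rintro rfl; rw [m₂] at m₃; revert m₃; decide
  · rcases toZMod_root hz with h | h | h
    · exact Or.inl (u₁ z hz (by simpa using h))
    · exact Or.inr (Or.inl (u₂ z hz (by simpa using h)))
    · exact Or.inr (Or.inr (u₃ z hz (by simpa using h)))
  · rintro (rfl | rfl | rfl) <;> assumption

/-! ### A transposition from the decomposition group at 41 -/

/-- An algebraic closure of `ℚ₄₁`. -/
abbrev Qbar41 : Type := AlgebraicClosure ℚ_[41]

instance : Fact ((qQuintic.map (algebraMap ℚ Qbar41)).Splits) := ⟨IsAlgClosed.splits _⟩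

lemma mem_rootSet_iff {x : Qbar41} : x ∈ qQuintic.rootSet Qbar41 ↔ aeval x qQuinticInt = 0 := by
  rw [mem_rootSet_of_ne qQuintic_irreducible.ne_zero, ← qQuinticInt_map, aeval_map_algebraMap]

lemma card_rootSet : Fintype.card (qQuintic.rootSet Qbar41) = 5 := by
  rw [card_rootSet_eq_natDegree qQuintic_irreducible.separable (IsAlgClosed.splits _),
    qQuintic_natDegree]

/-- A root of the quintic in `ℚ₄₁` is integral over `ℤ`, hence lies in `ℤ₄₁`. -/
lemma exists_padicInt_of_root {y : ℚ_[41]} (hy : aeval y qQuinticInt = 0) :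
    ∃ z : ℤ_[41], algebraMap ℤ_[41] ℚ_[41] z = y := by
  have hint : IsIntegral ℤ y := ⟨qQuinticInt, qQuinticInt_monic, by simpa [aeval_def] using hy⟩
  exact IsIntegrallyClosed.algebraMap_eq_of_integral (hint.tower_top (A := ℤ_[41]))

open scoped Classical in
/-- An element of `Gal(ℚ̄₄₁/ℚ₄₁)` fixes the three roots in `ℚ₄₁`; one that moves a fourth root can
only exchange the two remaining ones. -/
lemma exists_isSwap : ∃ g : qQuintic.Gal, (Gal.galActionHom qQuintic Qbar41 g).IsSwap := by
  obtain ⟨z₁, z₂, z₃, h12, h13, h23, hz⟩ := exists_three_roots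
  let ι : ℤ_[41] →+* Qbar41 := (algebraMap ℚ_[41] Qbar41).comp (algebraMap ℤ_[41] ℚ_[41])
  have hι : Function.Injective ι :=
    (algebraMap ℚ_[41] Qbar41).injective.comp (IsFractionRing.injective ℤ_[41] ℚ_[41])
  have hroot (z : ℤ_[41]) : ι z ∈ qQuintic.rootSet Qbar41 ↔ z = z₁ ∨ z = z₂ ∨ z = z₃ := by
    rw [mem_rootSet_iff, ← hz]
    have : aeval (ι z) qQuinticInt = ι (aeval z qQuinticInt) := by
      simp [qQuinticInt_aeval, map_ofNat]
    rw [this, map_eq_zero_iff _ hι]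
  let r₁ : qQuintic.rootSet Qbar41 := ⟨ι z₁, (hroot _).2 (by simp)⟩
  let r₂ : qQuintic.rootSet Qbar41 := ⟨ι z₂, (hroot _).2 (by simp)⟩
  let r₃ : qQuintic.rootSet Qbar41 := ⟨ι z₃, (hroot _).2 (by simp)⟩
  have hcard : ({r₁, r₂, r₃} : Finset (qQuintic.rootSet Qbar41)).card = 3 := by
    refine Finset.card_eq_three.2 ⟨r₁, r₂, r₃, ?_, ?_, ?_, rfl⟩
    · exact fun h => h12 (hι (congrArg Subtype.val h))
    · exact fun h => h13 (hι (congrArg Subtype.val h))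
    · exact fun h => h23 (hι (congrArg Subtype.val h))
  obtain ⟨x, hx⟩ : ∃ x, x ∉ ({r₁, r₂, r₃} : Finset (qQuintic.rootSet Qbar41)) := by
    by_contra! h
    have := Finset.card_le_card (fun a _ => h a : Finset.univ ⊆ _)
    rw [Finset.card_univ, card_rootSet, hcard] at this
    omega
  have hxK : (x : Qbar41) ∉ Set.range (algebraMap ℚ_[41] Qbar41) := by
    rintro ⟨y, hy⟩
    have hy0 : aeval y qQuinticInt = 0 := by
      have h := mem_rootSet_iff.1 x.2
      rw [← hy, aeval_algebraMap_apply] at h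
      exact (map_eq_zero _).1 h
    obtain ⟨z, rfl⟩ := exists_padicInt_of_root hy0
    have hzx : ι z = x := hy
    apply hx
    rcases (hroot z).1 (hzx ▸ x.2) with rfl | rfl | rfl <;>
      simp [r₁, r₂, r₃, Subtype.ext_iff, hzx]
  obtain ⟨σ, hσ⟩ : ∃ σ : Qbar41 ≃ₐ[ℚ_[41]] Qbar41, σ x ≠ x := by
    by_contra! h
    exact hxK ((InfiniteGalois.mem_range_algebraMap_iff_fixed (k := ℚ_[41]) (x : Qbar41)).2 h)
  let g : qQuintic.Gal := Gal.restrict qQuintic Qbar41 (σ.restrictScalars ℚ)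
  have hg (y : qQuintic.rootSet Qbar41) :
      ((Gal.galActionHom qQuintic Qbar41 g y : qQuintic.rootSet Qbar41) : Qbar41) = σ y :=
    Gal.galActionHom_restrict qQuintic Qbar41 (σ.restrictScalars ℚ) y
  refine ⟨g, ?_⟩
  rw [← Equiv.Perm.card_support_eq_two]
  have hsub : (Gal.galActionHom qQuintic Qbar41 g).support ⊆ {r₁, r₂, r₃}ᶜ := by
    intro y hy
    rw [Equiv.Perm.mem_support] at hy
    rw [Finset.mem_compl]
    intro hmem
    apply hy
    apply Subtype.ext
    rw [hg]
    simp only [Finset.mem_insert, Finset.mem_singleton] at hmem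
    rcases hmem with rfl | rfl | rfl <;> exact σ.commutes _
  have hle := Finset.card_le_card hsub
  rw [Finset.card_compl, card_rootSet, hcard] at hle
  have hne : Gal.galActionHom qQuintic Qbar41 g ≠ 1 := by
    intro h
    apply hσ
    rw [← hg, h]
    rfl
  have := Equiv.Perm.two_le_card_support_of_ne_one hne
  omega

lemma galActionHom_bijective : Function.Bijective (Gal.galActionHom qQuintic Qbar41) := by
  classical
  obtain ⟨g, hg⟩ := exists_isSwap
  refine ⟨Gal.galActionHom_injective qQuintic Qbar41, MonoidHom.range_eq_top.1 ?_⟩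
  apply Equiv.Perm.subgroup_eq_top_of_swap_mem (τ := Gal.galActionHom qQuintic Qbar41 g)
  · rw [card_rootSet]; norm_num
  · rw [card_rootSet, ← qQuintic_natDegree, Fintype.card_eq_nat_card,
      Nat.card_congr (MonoidHom.ofInjective
        (Gal.galActionHom_injective qQuintic Qbar41)).toEquiv.symm]
    exact Gal.prime_degree_dvd_card qQuintic_irreducible (by rw [qQuintic_natDegree]; norm_num)
  · exact ⟨g, rfl⟩
  · exact hg

/-- the Galois group of the splitting field of `qQuintic` over `ℚ`
is isomorphic to the symmetric group `S₅`. -/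
theorem stmt7 : Nonempty (qQuintic.Gal ≃* Equiv.Perm (Fin 5)) := by
  have e : qQuintic.rootSet Qbar41 ≃ Fin 5 := Fintype.equivFinOfCardEq card_rootSet
  exact ⟨(MulEquiv.ofBijective _ galActionHom_bijective).trans e.permCongrHom⟩
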